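/- arXiv:0802.2668 — 2 statements merged into one kernel-verified Lean document; each statement's English description precedes it below -/
import Mathlib

section
/- Let k ≥ 3 be odd, let C1 = x1–…–xk–x1 and C2 = y1–…–yk–y1 be two disjoint cycles of length k, and let G be the simple graph consisting of C1 and C2 together with the edges x_i y_i for i = 1, …, k. Let S assign to each vertex y_i a set of exactly 3 integers. Then at most one proper coloring of C1 fails to extend to G: if c and c' are proper colorings of C1 (functions into ℤ with cyclically consecutive vertices receiving distinct values) such that neither c nor c' can be completed to a coloring of all of G in which each y_i receives a color from S(y_i) and every pair of adjacent vertices of G receives distinct colors, then c = c'. -/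
/-!
Deleting from each list `S i` the color `c i` leaves lists of size at least two around a cycle.
A cycle with such lists can be colored greedily, starting at `i + 1` with a color `a` and going
around to `i`, as soon as `L i` still offers two colors other than `a`. Hence if no coloring
exists, every color of `L (i + 1)` lies in `L i` and `L i` has exactly two elements, so all lists
are equal to one pair. A coloring `c` that does not extend therefore satisfies
`S i = {c i} ∪ T` with `T` a fixed pair, and two such decompositions with different pairs would
force `c` to be constant.
-/

section Cycle

variable {α : Type*} {k : ℕ}

/-- List-colorability of the cycle on `ZMod k` with edges joining `i` and `i + 1`: a choice of
colors from the lists `L` that differ on consecutive vertices. -/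
def CycleListColorable (L : ZMod k → Finset α) : Prop :=
  ∃ d : ZMod k → α, (∀ i, d i ∈ L i) ∧ ∀ i, d i ≠ d (i + 1)

theorem CycleListColorable.of_translate {L : ZMod k → Finset α} (i : ZMod k)
    (h : CycleListColorable fun j => L (j + i)) : CycleListColorable L := by
  obtain ⟨d, hmem, hne⟩ := h
  refine ⟨fun j => d (j - i), fun j => ?_, fun j => ?_⟩
  · simpa only [sub_add_cancel] using hmem (j - i)
  · simpa only [sub_add_eq_add_sub] using hne (j - i)

theorem exists_seq_mem_ne_succ {L : ℕ → Finset α} (hL : ∀ n, 1 < (L (n + 1)).card) {a : α}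
    (ha : a ∈ L 0) : ∃ f : ℕ → α, f 0 = a ∧ (∀ n, f n ∈ L n) ∧ ∀ n, f n ≠ f (n + 1) := by
  choose next next_mem next_ne using fun n x => Finset.exists_mem_ne (hL n) x
  refine ⟨fun n => Nat.rec a next n, rfl, fun n => ?_, fun n => (next_ne n _).symm⟩
  cases n with
  | zero => exact ha
  | succ n => exact next_mem n _

theorem zmod_val_add_one_of_ne_neg_one [NeZero k] {j : ZMod k} (hj : j ≠ -1) :
    (j + 1).val = j.val + 1 := by
  obtain ⟨n, rfl⟩ := Nat.exists_eq_succ_of_ne_zero (NeZero.ne k)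
  have hlast : j ≠ Fin.last n := fun h =>
    hj (ZMod.val_injective _ ((congrArg Fin.val h).trans (ZMod.val_neg_one n).symm))
  exact (Fin.val_add_one j).trans (if_neg hlast)

theorem exists_coloring_of_delete_edge [NeZero k] {L : ZMod k → Finset α}
    (hL : ∀ j, 1 < (L j).card) {a : α} (ha : a ∈ L 0) :
    ∃ d : ZMod k → α, d 0 = a ∧ (∀ j, d j ∈ L j) ∧ ∀ j, j ≠ -1 → d j ≠ d (j + 1) := by
  obtain ⟨f, f_zero, f_mem, f_ne⟩ :=
    exists_seq_mem_ne_succ (L := fun n => L n) (fun n => hL _) (by simpa only [Nat.cast_zero])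
  refine ⟨fun j => f j.val, by simpa only [ZMod.val_zero], fun j => ?_, fun j hj => ?_⟩
  · simpa only [ZMod.natCast_zmod_val] using f_mem j.val
  · simpa only [zmod_val_add_one_of_ne_neg_one hj] using f_ne j.val

theorem cycleListColorable_of_one_lt_card_erase_neg_one [DecidableEq α] [Fact (1 < k)]
    {L : ZMod k → Finset α} (hL : ∀ j, 1 < (L j).card) {a : α} (ha : a ∈ L 0)
    (hlast : 1 < ((L (-1)).erase a).card) : CycleListColorable L := by
  have : NeZero k := ⟨(zero_lt_one.trans Fact.out).ne'⟩
  let M := Function.update L (-1) ((L (-1)).erase a)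
  have one_lt_card : ∀ j, 1 < (M j).card :=
    (Function.forall_update_iff L fun _ s => 1 < s.card).2 ⟨hlast, fun j _ => hL j⟩
  have subset : ∀ j, M j ⊆ L j :=
    (Function.forall_update_iff L fun j s => s ⊆ L j).2
      ⟨Finset.erase_subset _ _, fun _ _ => subset_rfl⟩
  have haM : a ∈ M 0 := by
    have zero_ne : (0 : ZMod k) ≠ -1 := (neg_ne_zero.2 one_ne_zero).symm
    simpa only [M, Function.update_of_ne zero_ne] using ha
  obtain ⟨d, d_zero, d_mem, d_ne⟩ := exists_coloring_of_delete_edge one_lt_card haM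
  refine ⟨d, fun j => subset j (d_mem j), fun j => ?_⟩
  obtain rfl | hj := eq_or_ne j (-1)
  · have d_last : d (-1) ∈ (L (-1)).erase a := by
      simpa only [M, Function.update_self] using d_mem (-1)
    simpa only [neg_add_cancel, d_zero] using Finset.ne_of_mem_erase d_last
  · exact d_ne j hj

theorem cycleListColorable_of_one_lt_card_erase [DecidableEq α] [Fact (1 < k)]
    {L : ZMod k → Finset α} (hL : ∀ j, 1 < (L j).card) {i : ZMod k} {a : α}
    (ha : a ∈ L (i + 1)) (hi : 1 < ((L i).erase a).card) : CycleListColorable L := by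
  refine .of_translate (i + 1) (cycleListColorable_of_one_lt_card_erase_neg_one (a := a)
    (fun _ => hL _) ?_ ?_)
  · rwa [zero_add]
  · rwa [neg_add_cancel_comm_assoc]

theorem exists_card_eq_two_of_not_cycleListColorable [Fact (1 < k)] {L : ZMod k → Finset α}
    (hL : ∀ i, 1 < (L i).card) (h : ¬ CycleListColorable L) :
    ∃ T : Finset α, T.card = 2 ∧ ∀ i, L i = T := by
  classical
  have card_erase : ∀ i, ∀ a ∈ L (i + 1), ((L i).erase a).card ≤ 1 := fun i a ha =>
    not_lt.1 fun hlt => h (cycleListColorable_of_one_lt_card_erase hL ha hlt)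
  have subset : ∀ i, L (i + 1) ⊆ L i := fun i a ha => by
    by_contra hai
    have := card_erase i a ha
    rw [Finset.erase_eq_of_notMem hai] at this
    exact (hL i).not_ge this
  have card_eq : ∀ i, (L i).card = 2 := fun i => by
    obtain ⟨a, ha⟩ := Finset.card_pos.1 (zero_lt_one.trans (hL (i + 1)))
    have := card_erase i a ha
    rw [Finset.card_erase_of_mem (subset i ha)] at this
    have := hL i
    omega
  have periodic : Function.Periodic L 1 := fun i =>
    Finset.eq_of_subset_of_card_le (subset i) (by rw [card_eq, card_eq])
  refine ⟨L 0, card_eq 0, fun i => ?_⟩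
  obtain ⟨n, rfl⟩ := ZMod.intCast_surjective i
  simpa only [mul_one] using periodic.int_mul_eq n

theorem exists_eq_insert_of_not_extends [DecidableEq α] [Fact (1 < k)]
    {S : ZMod k → Finset α} (hS : ∀ i, 3 ≤ (S i).card) {c : ZMod k → α}
    (h : ¬ ∃ d : ZMod k → α, (∀ i, d i ∈ S i) ∧ (∀ i, d i ≠ d (i + 1)) ∧ ∀ i, c i ≠ d i) :
    ∃ T : Finset α, T.card = 2 ∧ ∀ i, c i ∉ T ∧ S i = insert (c i) T := by
  have not_colorable : ¬ CycleListColorable fun i => (S i).erase (c i) := fun ⟨d, hmem, hne⟩ =>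
    h ⟨d, fun i => Finset.mem_of_mem_erase (hmem i), hne,
      fun i => (Finset.ne_of_mem_erase (hmem i)).symm⟩
  have one_lt_card : ∀ i, 1 < ((S i).erase (c i)).card := fun i =>
    (Nat.sub_le_sub_right (hS i) 1).trans Finset.pred_card_le_card_erase
  obtain ⟨T, hT, hST⟩ := exists_card_eq_two_of_not_cycleListColorable one_lt_card not_colorable
  refine ⟨T, hT, fun i => ?_⟩
  have hmem : c i ∈ S i := by
    by_contra hc
    have hSi : S i = T := (Finset.erase_eq_of_notMem hc).symm.trans (hST i)
    exact absurd (hSi ▸ hS i) (by omega)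
  rw [← hST i]
  exact ⟨Finset.notMem_erase _ _, (Finset.insert_erase hmem).symm⟩

theorem eq_of_forall_insert_eq_insert [DecidableEq α] {ι : Type*} {c c' : ι → α}
    (hc : ∃ i j, c i ≠ c j) {T T' : Finset α} (hcard : T.card ≤ T'.card)
    (hT : ∀ i, c i ∉ T) (h : ∀ i, insert (c i) T = insert (c' i) T') : c = c' := by
  have subset : T' ⊆ T := fun x hx => by
    by_contra hxT
    have hx_mem : ∀ i, x ∈ insert (c i) T := fun i => h i ▸ Finset.mem_insert_of_mem hx
    have hx_eq : ∀ i, x = c i := fun i => (Finset.mem_insert.1 (hx_mem i)).resolve_right hxT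
    obtain ⟨i, j, hij⟩ := hc
    exact hij ((hx_eq i).symm.trans (hx_eq j))
  obtain rfl : T' = T := Finset.eq_of_subset_of_card_le subset hcard
  exact funext fun i => (Finset.insert_inj (hT i)).1 (h i)

end Cycle

theorem odd_cycle_prism_at_most_one_bad_coloring_general {α : Type*} {k : ℕ} (hk : 1 < k)
    {S : ZMod k → Finset α} (hS : ∀ i, 3 ≤ (S i).card) {c c' : ZMod k → α}
    (hc : ∃ i j, c i ≠ c j)
    (h : ¬ ∃ d : ZMod k → α, (∀ i, d i ∈ S i) ∧ (∀ i, d i ≠ d (i + 1)) ∧ ∀ i, c i ≠ d i)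
    (h' : ¬ ∃ d : ZMod k → α, (∀ i, d i ∈ S i) ∧ (∀ i, d i ≠ d (i + 1)) ∧ ∀ i, c' i ≠ d i) :
    c = c' := by
  classical
  have : Fact (1 < k) := ⟨hk⟩
  obtain ⟨T, hT, hST⟩ := exists_eq_insert_of_not_extends hS h
  obtain ⟨T', hT', hST'⟩ := exists_eq_insert_of_not_extends hS h'
  exact eq_of_forall_insert_eq_insert hc (hT.trans hT'.symm).le (fun i => (hST i).1)
    fun i => (hST i).2.symm.trans (hST' i).2

/-- Lemma 4.2: `C₁` and `C₂` are two disjoint odd cycles of length `k` (with vertices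
indexed by `ZMod k`, vertex `i` adjacent to `i + 1`), joined by the matching edges
`xᵢyᵢ`.  If each vertex `yᵢ` of `C₂` carries a list `S i` of exactly 3 integers, then
at most one proper coloring of `C₁` fails to extend to the whole graph (a completion
is a coloring `d` of `C₂` from the lists, proper on `C₂`, with `d i ≠ c i` for the
matching edges). -/
theorem odd_cycle_prism_at_most_one_bad_coloring (k : ℕ) (hk : 3 ≤ k) (hodd : Odd k)
    (S : ZMod k → Finset ℤ) (hS : ∀ i, (S i).card = 3)
    (c c' : ZMod k → ℤ)
    (hc : ∀ i : ZMod k, c i ≠ c (i + 1))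
    (hc' : ∀ i : ZMod k, c' i ≠ c' (i + 1))
    (h1 : ¬ ∃ d : ZMod k → ℤ, (∀ i, d i ∈ S i) ∧
      (∀ i : ZMod k, d i ≠ d (i + 1)) ∧ ∀ i, c i ≠ d i)
    (h2 : ¬ ∃ d : ZMod k → ℤ, (∀ i, d i ∈ S i) ∧
      (∀ i : ZMod k, d i ≠ d (i + 1)) ∧ ∀ i, c' i ≠ d i) :
    c = c' := by
  exact odd_cycle_prism_at_most_one_bad_coloring_general (by omega) (fun i => (hS i).ge)
    ⟨0, 0 + 1, hc 0⟩ h1 h2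
end

section
/- Let G be a finite simple graph and f : V(G) → {2,3}. Let W be a finite simple graph with a distinguished vertex u0 such that W is 3-choosable but W is not g-choosable, where g(u0) = 2 and g(w) = 3 for all vertices w ≠ u0 of W. Let G' be the simple graph obtained from G by adding, for each vertex v of G with f(v) = 2, a new disjoint copy W_v of W together with the edge joining v to the vertex u0 of W_v. Then G' is 3-choosable if and only if G is f-choosable. -/
/-- The graph `G'` obtained from `G` by adding, for each vertex `v` of `G` with
`f v = m`, a new disjoint copy of `W` together with the edge joining `v` to the
vertex `u0` of that copy. -/
def glueGraph {V U : Type} (G : SimpleGraph V) (f : V → ℕ) (m : ℕ)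
    (W : SimpleGraph U) (u0 : U) :
    SimpleGraph (V ⊕ ({v : V // f v = m} × U)) :=
  SimpleGraph.fromRel (fun p q =>
    (∃ a b, G.Adj a b ∧ p = Sum.inl a ∧ q = Sum.inl b) ∨
    (∃ (v : {v : V // f v = m}) (w w' : U), W.Adj w w' ∧
      p = Sum.inr (v, w) ∧ q = Sum.inr (v, w')) ∨
    (∃ v : {v : V // f v = m}, p = Sum.inl v.1 ∧ q = Sum.inr (v, u0)))

/-! If `W` cannot be colored from lists `L` in which the list of `u0` is one short, then adding any
color `x` to `L u0` forces a coloring of `W` to use `x` at `u0`. Choosing `x` outside the list of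
`v`, the copy of `W` attached at `v` does nothing but forbid the extra color `x` at `v`. Conversely,
color the copies of `W` first: each one deletes at most one color from the list of its vertex `v`,
which was one longer to begin with. -/

variable {V U α : Type*}

/-- `c` is a proper coloring of `G` that picks the color of each vertex `v` from its list `S v`. -/
def IsListColoring (G : SimpleGraph V) (S : V → Finset α) (c : V → α) : Prop :=
  (∀ v, c v ∈ S v) ∧ ∀ p q, G.Adj p q → c p ≠ c q

/-- `f`-choosability of `G`, for lists of colors taken from `α`. -/
def Choosable (α : Type*) (G : SimpleGraph V) (f : V → ℕ) : Prop :=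
  ∀ S : V → Finset α, (∀ v, (S v).card = f v) → ∃ c, IsListColoring G S c

theorem IsListColoring.imp {G : SimpleGraph V} {S T : V → Finset α} {c : V → α}
    (hc : IsListColoring G S c) (h : ∀ v, c v ∈ S v → c v ∈ T v) : IsListColoring G T c :=
  ⟨fun v => h v (hc.1 v), hc.2⟩

theorem Choosable.exists_isListColoring_of_le {G : SimpleGraph V} {f : V → ℕ}
    (hG : Choosable α G f) {S : V → Finset α} (hS : ∀ v, f v ≤ (S v).card) :
    ∃ c, IsListColoring G S c := by
  choose T hTS hT using fun v => Finset.exists_subset_card_eq (hS v)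
  obtain ⟨c, hc⟩ := hG T hT
  exact ⟨c, hc.imp fun v hv => hTS v hv⟩

theorem choosable_update_iff [DecidableEq V] {G : SimpleGraph V} {f : V → ℕ} {v0 : V} {n : ℕ} :
    Choosable α G (Function.update f v0 n) ↔ ∀ S : V → Finset α,
      ((S v0).card = n ∧ ∀ v, v ≠ v0 → (S v).card = f v) → ∃ c, IsListColoring G S c :=
  forall_congr' fun S =>
    imp_congr_left (Function.forall_update_iff f fun v k => (S v).card = k)

theorem exists_lists_forcing_of_not_choosable [DecidableEq U] [DecidableEq α] {W : SimpleGraph U}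
    {g : U → ℕ} (hg : ¬ Choosable α W g) (u0 : U) :
    ∃ L : U → Finset α, (∀ w, (L w).card = g w) ∧
      ∀ x c, IsListColoring W (Function.update L u0 (insert x (L u0))) c → c u0 = x := by
  simp only [Choosable, not_forall] at hg
  obtain ⟨L, hL, hbad⟩ := hg
  refine ⟨L, hL, fun x c hc => by_contra fun hne => hbad ⟨c, hc.imp fun w hw => ?_⟩⟩
  obtain rfl | hw0 := eq_or_ne w u0
  · exact Finset.mem_of_mem_insert_of_ne (by simpa using hw) hne
  · simpa [hw0] using hw

section GlueGraph

variable {V U : Type} {G : SimpleGraph V} {f : V → ℕ} {m : ℕ} {W : SimpleGraph U} {u0 : U}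

theorem isListColoring_glueGraph_iff {S : V ⊕ ({v : V // f v = m} × U) → Finset α}
    {c : V ⊕ ({v : V // f v = m} × U) → α} :
    IsListColoring (glueGraph G f m W u0) S c ↔
      IsListColoring G (fun v => S (.inl v)) (fun v => c (.inl v)) ∧
      (∀ v, IsListColoring W (fun w => S (.inr (v, w))) (fun w => c (.inr (v, w)))) ∧
      ∀ v : {v : V // f v = m}, c (.inl v) ≠ c (.inr (v, u0)) := by
  constructor
  · rintro ⟨hmem, hadj⟩
    refine ⟨⟨fun v => hmem _, fun a b hab => hadj _ _ ?_⟩,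
      fun v => ⟨fun w => hmem _, fun w w' hw => hadj _ _ ?_⟩, fun v => hadj _ _ ?_⟩
    · exact ⟨by simpa using hab.ne, .inl (.inl ⟨a, b, hab, rfl, rfl⟩)⟩
    · exact ⟨by simpa using hw.ne, .inl (.inr (.inl ⟨v, w, w', hw, rfl, rfl⟩))⟩
    · exact ⟨Sum.inl_ne_inr, .inl (.inr (.inr ⟨v, rfl, rfl⟩))⟩
  · rintro ⟨hG, hW, hlink⟩
    refine ⟨Sum.rec hG.1 fun z => (hW z.1).1 z.2, ?_⟩
    rintro p q ⟨-, (⟨a, b, hab, rfl, rfl⟩ | ⟨v, w, w', hw, rfl, rfl⟩ | ⟨v, rfl, rfl⟩) |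
      (⟨a, b, hab, rfl, rfl⟩ | ⟨v, w, w', hw, rfl, rfl⟩ | ⟨v, rfl, rfl⟩)⟩
    · exact hG.2 a b hab
    · exact (hW v).2 w w' hw
    · exact hlink v
    · exact (hG.2 a b hab).symm
    · exact ((hW v).2 w w' hw).symm
    · exact (hlink v).symm

/-- List sizes on the vertices of `glueGraph G f m W u0`: the copies of `W` carry the sizes `h`,
and `G` carries the sizes `s`, raised by one at the vertices to which a copy is attached. -/
def glueSize (f : V → ℕ) (m : ℕ) (s : V → ℕ) (h : U → ℕ) :
    V ⊕ ({v : V // f v = m} × U) → ℕ :=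
  Sum.elim (fun v => if f v = m then s v + 1 else s v) (fun z => h z.2)

theorem Choosable.glueGraph_glueSize {s : V → ℕ} {h : U → ℕ} (hG : Choosable α G s)
    (hW : Choosable α W h) : Choosable α (glueGraph G f m W u0) (glueSize f m s h) := by
  classical
  intro S hS
  choose d hd using fun v : {v : V // f v = m} =>
    hW (fun w => S (.inr (v, w))) (fun w => hS (.inr (v, w)))
  let T : V → Finset α := fun v =>
    if hv : f v = m then (S (.inl v)).erase (d ⟨v, hv⟩ u0) else S (.inl v)
  have hTS : ∀ v, T v ⊆ S (.inl v) := fun v => by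
    dsimp only [T]
    split
    exacts [Finset.erase_subset _ _, subset_rfl]
  have hTcard : ∀ v, s v ≤ (T v).card := fun v => by
    have hSv := hS (.inl v)
    by_cases hv : f v = m
    · simp only [glueSize, Sum.elim_inl, hv, if_true] at hSv
      simpa [T, hv, hSv] using Finset.pred_card_le_card_erase (s := S (.inl v))
        (a := d ⟨v, hv⟩ u0)
    · simp [T, hv, hSv, glueSize]
  obtain ⟨c, hc⟩ := hG.exists_isListColoring_of_le hTcard
  have hlink : ∀ v : {v : V // f v = m}, c v ≠ d v u0 := fun v =>
    Finset.ne_of_mem_erase (s := S (.inl v)) (by simpa [T, v.2] using hc.1 v)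
  exact ⟨Sum.elim c fun z => d z.1 z.2, isListColoring_glueGraph_iff.2
    ⟨hc.imp fun v hv => hTS v hv, hd, hlink⟩⟩

theorem Choosable.of_glueGraph [DecidableEq U] [Infinite α] {s : V → ℕ} {h : U → ℕ} {n : ℕ}
    (hn : h u0 = n + 1) (hW : ¬ Choosable α W (Function.update h u0 n))
    (hGW : Choosable α (glueGraph G f m W u0) (glueSize f m s h)) : Choosable α G s := by
  classical
  intro S hS
  obtain ⟨L, hL, hforce⟩ := exists_lists_forcing_of_not_choosable hW u0
  choose x hx using fun v => Infinite.exists_notMem_finset (S v ∪ L u0)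
  simp only [Finset.mem_union, not_or] at hx
  let T : V ⊕ ({v : V // f v = m} × U) → Finset α :=
    Sum.elim (fun v => if f v = m then insert (x v) (S v) else S v)
      (fun z => Function.update L u0 (insert (x z.1) (L u0)) z.2)
  have hT : ∀ z, (T z).card = glueSize f m s h z := by
    rintro (v | ⟨v, w⟩)
    · by_cases hv : f v = m <;> simp [T, glueSize, hv, hx, hS]
    · obtain rfl | hw := eq_or_ne w u0
      · simp [T, glueSize, hx, hL, hn]
      · simp [T, glueSize, hw, hL]
  obtain ⟨c, hc⟩ := hGW T hT
  obtain ⟨hcG, hcW, hlink⟩ := isListColoring_glueGraph_iff.1 hc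
  refine ⟨fun v => c (.inl v), hcG.imp fun v hv => ?_⟩
  by_cases hvm : f v = m
  · have hroot : c (.inr (⟨v, hvm⟩, u0)) = x v := hforce (x v) _ (hcW ⟨v, hvm⟩)
    have hne : c (.inl v) ≠ x v := hroot ▸ hlink ⟨v, hvm⟩
    exact Finset.mem_of_mem_insert_of_ne (by simpa [T, hvm] using hv) hne
  · simpa [T, hvm] using hv

theorem glueSize_eq_const (hf : ∀ v, f v = m ∨ f v = m + 1) :
    glueSize f m f (fun _ : U => m + 1) = fun _ => m + 1 := by
  ext (v | z)
  · obtain hv | hv := hf v <;> simp [glueSize, hv]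
  · rfl

theorem glue_three_choosable_iff_general [DecidableEq U] [Infinite α] {s : V → ℕ} {h : U → ℕ}
    {n : ℕ} (hn : h u0 = n + 1) (hW : Choosable α W h)
    (hWn : ¬ Choosable α W (Function.update h u0 n)) :
    Choosable α (glueGraph G f m W u0) (glueSize f m s h) ↔ Choosable α G s :=
  ⟨.of_glueGraph hn hWn, fun hG => hG.glueGraph_glueSize hW⟩

end GlueGraph

/-- The reduction in the proof of Theorem 1.10: if `W` is a 3-choice-critical gadget
(3-choosable, but not colorable from some lists of size 3 with a list of size 2 at
`u0`), then the graph `G'` obtained from `G` by attaching a copy of `W` at every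
vertex `v` with `f v = 2` is 3-choosable iff `G` is `f`-choosable. -/
theorem glue_three_choosable_iff {V U : Type} [Fintype V] [Fintype U]
    (G : SimpleGraph V) (f : V → ℕ) (hf : ∀ v, f v = 2 ∨ f v = 3)
    (W : SimpleGraph U) (u0 : U)
    (hW3 : ∀ S : U → Finset ℤ, (∀ w, (S w).card = 3) →
      ∃ c : U → ℤ, (∀ w, c w ∈ S w) ∧ ∀ p q, W.Adj p q → c p ≠ c q)
    (hWg : ¬ ∀ S : U → Finset ℤ,
      ((S u0).card = 2 ∧ ∀ w, w ≠ u0 → (S w).card = 3) →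
      ∃ c : U → ℤ, (∀ w, c w ∈ S w) ∧ ∀ p q, W.Adj p q → c p ≠ c q) :
    (∀ S : (V ⊕ ({v : V // f v = 2} × U)) → Finset ℤ, (∀ z, (S z).card = 3) →
      ∃ c : (V ⊕ ({v : V // f v = 2} × U)) → ℤ, (∀ z, c z ∈ S z) ∧
        ∀ p q, (glueGraph G f 2 W u0).Adj p q → c p ≠ c q) ↔
    (∀ S : V → Finset ℤ, (∀ v, (S v).card = f v) →
      ∃ c : V → ℤ, (∀ v, c v ∈ S v) ∧ ∀ p q, G.Adj p q → c p ≠ c q) := by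
  classical
  change Choosable ℤ (glueGraph G f 2 W u0) (fun _ => 2 + 1) ↔ Choosable ℤ G f
  rw [← glueSize_eq_const hf]
  exact glue_three_choosable_iff_general rfl hW3 (mt choosable_update_iff.1 hWg)
end
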